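/- Let (k, [·,·], K) be a quadratic real Lie algebra, i.e. K is a symmetric, nondegenerate, invariant bilinear form on k (invariance: K([u,v],w) = K(u,[v,w]) for all u,v,w ∈ k). Let k* be the dual of k, with coadjoint action ad*_u defined by ⟨ad*_u η, w⟩ := −⟨η, [u,w]⟩. Set g̃₋₁ := ℝ and g̃₀ := k ⊕ k*, and define: l̃₁ := 0; l̃₂((u,ξ),(v,η)) := ( [u,v], K([u,v],·) + ad*_u η − ad*_v ξ ); l̃₂((u,ξ),r) := 0 for r ∈ ℝ; l̃₃((u,ξ),(v,η),(w,ζ)) := −½K([u,v],w) − ½( ⟨ζ,[u,v]⟩ + ⟨ξ,[v,w]⟩ + ⟨η,[w,u]⟩ ). Then (g̃₀, g̃₋₁, l̃₁, l̃₂, l̃₃) is a 2-term L∞-algebra. -/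

import Mathlib

/-- A 2-term L∞-algebra over ℝ. -/
structure TwoTermLinfty (G0 G1 : Type*) [AddCommGroup G0] [Module ℝ G0]
    [AddCommGroup G1] [Module ℝ G1] where
  l1 : G1 →ₗ[ℝ] G0
  l2 : G0 →ₗ[ℝ] G0 →ₗ[ℝ] G0
  l2' : G0 →ₗ[ℝ] G1 →ₗ[ℝ] G1
  l3 : G0 →ₗ[ℝ] G0 →ₗ[ℝ] G0 →ₗ[ℝ] G1
  skew : ∀ x y, l2 x y = - l2 y x
  alt₁ : ∀ x y z, l3 x y z = - l3 y x z
  alt₂ : ∀ x y z, l3 x y z = - l3 x z y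
  ident_a : ∀ x m, l1 (l2' x m) = l2 x (l1 m)
  ident_b : ∀ m n, l2' (l1 m) n = - l2' (l1 n) m
  ident_c : ∀ x y z,
    l2 x (l2 y z) + l2 y (l2 z x) + l2 z (l2 x y) = l1 (l3 x y z)
  ident_d : ∀ x y m,
    l3 x y (l1 m) = l2' x (l2' y m) - l2' y (l2' x m) - l2' (l2 x y) m
  ident_e : ∀ w x y z,
    l3 (l2 w x) y z - l3 (l2 w y) x z + l3 (l2 w z) x y + l3 (l2 x y) w z
      - l3 (l2 x z) w y + l3 (l2 y z) w x
    = l2' w (l3 x y z) - l2' x (l3 w y z) + l2' y (l3 w x z) - l2' z (l3 w x y)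

/-- The coadjoint action: `⟨ad*_u η, w⟩ = −⟨η, [u,w]⟩`. -/
noncomputable def coad {k : Type*} [LieRing k] [LieAlgebra ℝ k] (u : k)
    (η : Module.Dual ℝ k) : Module.Dual ℝ k :=
  -(η ∘ₗ LieAlgebra.ad ℝ k u)

/-- The bracket `l̃₂` as a bilinear map. -/
noncomputable def stringL2 {k : Type*} [LieRing k] [LieAlgebra ℝ k]
    (K : k →ₗ[ℝ] k →ₗ[ℝ] ℝ) :
    (k × Module.Dual ℝ k) →ₗ[ℝ] (k × Module.Dual ℝ k) →ₗ[ℝ] (k × Module.Dual ℝ k) :=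
  LinearMap.mk₂ ℝ
    (fun a b => (⁅a.1, b.1⁆, K ⁅a.1, b.1⁆ + coad a.1 b.2 - coad b.1 a.2))
    (by
      intro a a' b
      ext
      · simp
      · simp [coad]; ring)
    (by
      intro c a b
      ext
      · simp
      · simp [coad])
    (by
      intro a b b'
      ext
      · simp
      · simp [coad]; ring)
    (by
      intro c a b
      ext
      · simp
      · simp [coad])

/-- The trilinear map `l̃₃`. -/
noncomputable def stringL3 {k : Type*} [LieRing k] [LieAlgebra ℝ k]
    (K : k →ₗ[ℝ] k →ₗ[ℝ] ℝ) :
    (k × Module.Dual ℝ k) →ₗ[ℝ] (k × Module.Dual ℝ k) →ₗ[ℝ] (k × Module.Dual ℝ k) →ₗ[ℝ] ℝ :=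
  LinearMap.mk₂ ℝ
    (fun a b =>
      { toFun := fun c => -(1/2 : ℝ) • K ⁅a.1, b.1⁆ c.1
          - (1/2 : ℝ) • (c.2 ⁅a.1, b.1⁆ + a.2 ⁅b.1, c.1⁆ + b.2 ⁅c.1, a.1⁆)
        map_add' := by intro c c'; simp; ring
        map_smul' := by intro r c; simp; ring })
    (by intro a a' b; apply LinearMap.ext; intro c; simp; ring)
    (by intro r a b; apply LinearMap.ext; intro c; simp; ring)
    (by intro a b b'; apply LinearMap.ext; intro c; simp; ring)
    (by intro r a b; apply LinearMap.ext; intro c; simp; ring)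

theorem stringL2_apply {k : Type*} [LieRing k] [LieAlgebra ℝ k]
    (K : k →ₗ[ℝ] k →ₗ[ℝ] ℝ) (a b : k × Module.Dual ℝ k) :
    stringL2 K a b = (⁅a.1, b.1⁆, K ⁅a.1, b.1⁆ + coad a.1 b.2 - coad b.1 a.2) := rfl

theorem stringL3_apply {k : Type*} [LieRing k] [LieAlgebra ℝ k]
    (K : k →ₗ[ℝ] k →ₗ[ℝ] ℝ) (a b c : k × Module.Dual ℝ k) :
    stringL3 K a b c = -(1/2 : ℝ) • K ⁅a.1, b.1⁆ c.1
          - (1/2 : ℝ) • (c.2 ⁅a.1, b.1⁆ + a.2 ⁅b.1, c.1⁆ + b.2 ⁅c.1, a.1⁆) := rfl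

theorem coad_apply' {k : Type*} [LieRing k] [LieAlgebra ℝ k] (u : k)
    (η : Module.Dual ℝ k) (w : k) : coad u η w = - η ⁅u, w⁆ := rfl

/-- Skew symmetry under a functional. -/
theorem dual_skew {k : Type*} [LieRing k] [LieAlgebra ℝ k] (f : Module.Dual ℝ k) (x y : k) :
    f ⁅x, y⁆ = - f ⁅y, x⁆ := by
  rw [← lie_skew, map_neg]

theorem dual_skew' {k : Type*} [LieRing k] [LieAlgebra ℝ k] (f : Module.Dual ℝ k) (x y z : k) :
    f ⁅x, ⁅y, z⁆⁆ = - f ⁅x, ⁅z, y⁆⁆ := by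
  rw [← lie_skew y z, lie_neg, map_neg]

theorem dual_lie_lie {k : Type*} [LieRing k] [LieAlgebra ℝ k] (f : Module.Dual ℝ k) (x y z : k) :
    f ⁅⁅x, y⁆, z⁆ = - f ⁅z, ⁅x, y⁆⁆ := dual_skew f _ _

theorem dual_jacobi {k : Type*} [LieRing k] [LieAlgebra ℝ k] (f : Module.Dual ℝ k) (x y z : k) :
    f ⁅x, ⁅y, z⁆⁆ + f ⁅y, ⁅z, x⁆⁆ + f ⁅z, ⁅x, y⁆⁆ = 0 := by
  rw [← map_add, ← map_add, lie_jacobi, map_zero]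

theorem stringL2_jacobi {k : Type*} [LieRing k] [LieAlgebra ℝ k]
    (K : k →ₗ[ℝ] k →ₗ[ℝ] ℝ)
    (hinv : ∀ u v w : k, K ⁅u, v⁆ w = K u ⁅v, w⁆) (x y z : k × Module.Dual ℝ k) :
    stringL2 K x (stringL2 K y z) + stringL2 K y (stringL2 K z x)
      + stringL2 K z (stringL2 K x y) = 0 := by
  obtain ⟨x, f⟩ := x
  obtain ⟨y, g⟩ := y
  obtain ⟨z, h⟩ := z
  refine Prod.ext (by simpa [stringL2_apply] using lie_jacobi x y z) ?_
  apply LinearMap.ext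
  intro t
  have hK : ∀ a b c : k, K ⁅b, c⁆ ⁅a, t⁆ = - K ⁅a, ⁅b, c⁆⁆ t := by
    intro a b c
    rw [← hinv, ← lie_skew, map_neg, LinearMap.neg_apply]
  have hJ : K ⁅x, ⁅y, z⁆⁆ t + K ⁅y, ⁅z, x⁆⁆ t + K ⁅z, ⁅x, y⁆⁆ t = 0 := by
    rw [← LinearMap.add_apply, ← LinearMap.add_apply, ← map_add, ← map_add, lie_jacobi]
    simp
  have e : ∀ (f : Module.Dual ℝ k) (a b : k),
      f ⁅⁅a, b⁆, t⁆ = f ⁅a, ⁅b, t⁆⁆ - f ⁅b, ⁅a, t⁆⁆ := by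
    intro f a b; rw [lie_lie, map_sub]
  simp only [stringL2_apply, Prod.snd_add, LinearMap.add_apply, LinearMap.sub_apply,
    coad_apply', hK, e, Prod.snd_zero, LinearMap.zero_apply]
  linarith

theorem stringL3_closed {k : Type*} [LieRing k] [LieAlgebra ℝ k]
    (K : k →ₗ[ℝ] k →ₗ[ℝ] ℝ)
    (hsymm : ∀ u v : k, K u v = K v u)
    (hinv : ∀ u v w : k, K ⁅u, v⁆ w = K u ⁅v, w⁆) (w x y z : k × Module.Dual ℝ k) :
    stringL3 K (stringL2 K w x) y z - stringL3 K (stringL2 K w y) x z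
      + stringL3 K (stringL2 K w z) x y + stringL3 K (stringL2 K x y) w z
      - stringL3 K (stringL2 K x z) w y + stringL3 K (stringL2 K y z) w x = 0 := by
  obtain ⟨w, e⟩ := w
  obtain ⟨x, f⟩ := x
  obtain ⟨y, g⟩ := y
  obtain ⟨z, h⟩ := z
  simp only [stringL2_apply, stringL3_apply, LinearMap.add_apply, LinearMap.sub_apply,
    coad_apply', hinv, smul_eq_mul, dual_lie_lie]
  have n1 := dual_skew' (K w) x z y
  have n2 := dual_skew' (K w) y z x
  have n3 := dual_skew' (K w) z y x
  have nJ := dual_jacobi (K w) x y z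
  have q : ∀ a b c : k, K a ⁅b, ⁅w, c⁆⁆ = K w ⁅c, ⁅a, b⁆⁆ := by
    intro a b c
    rw [← hinv, hsymm, hinv]
  have sex := dual_skew' e x y z
  have sey := dual_skew' e y z x
  have sez := dual_skew' e z x y
  have je := dual_jacobi e x y z
  have sfw := dual_skew' f w y z
  have sfy := dual_skew' f y z w
  have sfz := dual_skew' f z w y
  have jf := dual_jacobi f w y z
  have sgw := dual_skew' g w x z
  have sgx := dual_skew' g x z w
  have sgz := dual_skew' g z w x
  have jg := dual_jacobi g w x z
  have shw := dual_skew' h w x y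
  have shx := dual_skew' h x y w
  have shy := dual_skew' h y w x
  have jh := dual_jacobi h w x y
  simp only [q]
  linarith

/-- For a quadratic Lie algebra `(k, [·,·], K)` (`K` symmetric, nondegenerate and
invariant), the data `g̃₋₁ = ℝ`, `g̃₀ = k ⊕ k*`, `l̃₁ = 0`,
`l̃₂((u,ξ),(v,η)) = ([u,v], K([u,v],·) + ad*_u η − ad*_v ξ)`, `l̃₂((u,ξ),r) = 0`,
`l̃₃((u,ξ),(v,η),(w,ζ)) = −½K([u,v],w) − ½(⟨ζ,[u,v]⟩ + ⟨ξ,[v,w]⟩ + ⟨η,[w,u]⟩)`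
is a 2-term L∞-algebra. -/
theorem quadratic_stringType_twoTermLinfty (k : Type*) [LieRing k] [LieAlgebra ℝ k]
    (K : k →ₗ[ℝ] k →ₗ[ℝ] ℝ)
    (hsymm : ∀ u v : k, K u v = K v u)
    (hnondeg : ∀ u : k, (∀ v : k, K u v = 0) → u = 0)
    (hinv : ∀ u v w : k, K ⁅u, v⁆ w = K u ⁅v, w⁆) :
    ∃ T : TwoTermLinfty (k × Module.Dual ℝ k) ℝ,
      (∀ r : ℝ, T.l1 r = 0) ∧
      (∀ a b : k × Module.Dual ℝ k, T.l2 a b =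
        (⁅a.1, b.1⁆, K ⁅a.1, b.1⁆ + coad a.1 b.2 - coad b.1 a.2)) ∧
      (∀ (a : k × Module.Dual ℝ k) (r : ℝ), T.l2' a r = 0) ∧
      (∀ a b c : k × Module.Dual ℝ k, T.l3 a b c =
        -(1/2 : ℝ) • K ⁅a.1, b.1⁆ c.1
          - (1/2 : ℝ) • (c.2 ⁅a.1, b.1⁆ + a.2 ⁅b.1, c.1⁆ + b.2 ⁅c.1, a.1⁆)) := by
  refine ⟨{
    l1 := 0
    l2 := stringL2 K
    l2' := 0
    l3 := stringL3 K
    skew := ?_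
    alt₁ := ?_
    alt₂ := ?_
    ident_a := by intro x m; simp
    ident_b := by intro m n; simp
    ident_c := by
      intro x y z
      rw [stringL2_jacobi K hinv]; simp
    ident_d := by intro x y m; simp
    ident_e := by
      intro w x y z
      rw [stringL3_closed K hsymm hinv]; simp },
    fun r => rfl, fun a b => rfl, fun a r => rfl, fun a b c => rfl⟩
  · intro a b
    rw [stringL2_apply, stringL2_apply, ← lie_skew a.1 b.1, map_neg]
    ext
    · simp
    · simp; ring
  · intro a b c
    have h1 := dual_skew a.2 b.1 c.1
    have h2 := dual_skew b.2 c.1 a.1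
    have h3 := dual_skew c.2 a.1 b.1
    have h4 : K ⁅a.1, b.1⁆ c.1 = - K ⁅b.1, a.1⁆ c.1 := by
      rw [← lie_skew a.1 b.1, map_neg, LinearMap.neg_apply]
    simp only [stringL3_apply, smul_eq_mul]
    linarith
  · intro a b c
    have h1 := dual_skew a.2 b.1 c.1
    have h2 := dual_skew b.2 c.1 a.1
    have h3 := dual_skew c.2 a.1 b.1
    have h4 := dual_skew (K a.1) b.1 c.1
    simp only [stringL3_apply, smul_eq_mul, hinv]
    linarith
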